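/- arXiv:2410.01757 — 3 statements merged into one kernel-verified Lean document; each statement's English description precedes it below -/
import Mathlib

section
/- Let G be a countably infinite group in which every conjugacy class is finite (an FC group), and let G ↷ X be a free action by homeomorphisms on a compact metrizable space that has the marker property. Then the action has property FCSB. -/
open Set MeasureTheory Pointwise Topology

/-- The translates `g • U`, `g ∈ L`, are pairwise disjoint. -/
def LFreeSet {G X : Type*} [Group G] [MulAction G X] (L : Finset G) (U : Set X) : Prop :=
  ∀ g ∈ L, ∀ h ∈ L, g ≠ h → Disjoint (g • U) (h • U)

/-- `U` is a marker set: it is open and `G • U = X`. -/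
def IsMarkerSet (G : Type*) {X : Type*} [Group G] [MulAction G X] [TopologicalSpace X]
    (U : Set X) : Prop :=
  IsOpen U ∧ (⋃ g : G, g • U) = Set.univ

/-- The action has the marker property: for every finite `L ⊆ G` there is an `L`-free
marker set. -/
def MarkerProperty (G X : Type*) [Group G] [MulAction G X] [TopologicalSpace X] : Prop :=
  ∀ L : Finset G, ∃ U : Set X, IsMarkerSet G U ∧ LFreeSet L U

/-- The finite set `S` is `(K, ε)`-invariant: `|⋂_{g ∈ K} gS| > (1 - ε)|S|`. -/
def FolnerInv {G : Type*} [Group G] (K : Finset G) (ε : ℝ) (S : Finset G) : Prop :=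
  (1 - ε) * (S.card : ℝ) < ((⋂ g ∈ K, g • (S : Set G)).ncard : ℝ)

/-- `G` is amenable: there exist `(K, ε)`-invariant finite subsets for all `K` and `ε > 0`. -/
def IsAmenableGroup (G : Type*) [Group G] : Prop :=
  ∀ (K : Finset G) (ε : ℝ), 0 < ε → ∃ S : Finset G, FolnerInv K ε S

/-- The footprint `SV = ⋃_{g ∈ S} gV` of a tower `(S, V)`. -/
def Footprint {G X : Type*} [Group G] [MulAction G X] (S : Finset G) (V : Set X) : Set X :=
  ⋃ g ∈ S, g • V

/-- `{(S i, V i)}` is a castle: the bases are open and `S i`-free and the footprints are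
pairwise disjoint. -/
def IsCastle {G X : Type*} [Group G] [MulAction G X] [TopologicalSpace X] {n : ℕ}
    (S : Fin n → Finset G) (V : Fin n → Set X) : Prop :=
  (∀ i, IsOpen (V i)) ∧ (∀ i, LFreeSet (S i) (V i)) ∧
    (Pairwise fun i j => Disjoint (Footprint (S i) (V i)) (Footprint (S j) (V j)))

/-- Upper Banach density `D̄(A) = inf_F sup_x |A ∩ Fx| / |F|`. -/
noncomputable def upperBD (G : Type*) {X : Type*} [Group G] [MulAction G X] (A : Set X) : ℝ :=
  ⨅ F : {F : Finset G // F.Nonempty},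
    ⨆ x : X, ((A ∩ ((· • x) '' (F.1 : Set G))).ncard : ℝ) / (F.1.card : ℝ)

/-- Lower Banach density `D̲(A) = sup_F inf_x |A ∩ Fx| / |F|`. -/
noncomputable def lowerBD (G : Type*) {X : Type*} [Group G] [MulAction G X] (A : Set X) : ℝ :=
  ⨆ F : {F : Finset G // F.Nonempty},
    ⨅ x : X, ((A ∩ ((· • x) '' (F.1 : Set G))).ncard : ℝ) / (F.1.card : ℝ)

/-- The Uniform Rokhlin Property. -/
def URP (G X : Type*) [Group G] [MulAction G X] [TopologicalSpace X] : Prop :=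
  ∀ (K : Finset G) (ε : ℝ), 0 < ε →
    ∃ (n : ℕ) (S : Fin n → Finset G) (V : Fin n → Set X),
      IsCastle S V ∧ (∀ i, FolnerInv K ε (S i)) ∧
        upperBD G (Set.univ \ ⋃ i, Footprint (S i) (V i)) < ε

/-- Dynamical subequivalence of a (closed) set `A` to an open set `B`: `A` admits a finite
open cover whose pieces can be translated into pairwise disjoint subsets of `B`. -/
def Subeq (G : Type*) {X : Type*} [Group G] [MulAction G X] [TopologicalSpace X]
    (A B : Set X) : Prop :=
  ∃ (n : ℕ) (U : Fin n → Set X) (g : Fin n → G),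
    (∀ j, IsOpen (U j)) ∧ A ⊆ (⋃ j, U j) ∧ (∀ j, g j • U j ⊆ B) ∧
      (Pairwise fun j k => Disjoint (g j • U j) (g k • U k))

/-- `μ` is a `G`-invariant Borel probability measure. -/
def InvariantProb (G : Type*) {X : Type*} [Group G] [MulAction G X] [MeasurableSpace X]
    (μ : Measure X) : Prop :=
  IsProbabilityMeasure μ ∧ ∀ g : G, Measure.map (fun x => g • x) μ = μ

/-- The action has comparison. -/
def HasComparison (G X : Type*) [Group G] [MulAction G X] [TopologicalSpace X]
    [MeasurableSpace X] : Prop :=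
  ∀ A B : Set X, IsClosed A → IsOpen B →
    (∀ μ : Measure X, InvariantProb G μ → μ A < μ B) → Subeq G A B

/-- URPC: the Uniform Rokhlin Property together with comparison. -/
def URPC (G X : Type*) [Group G] [MulAction G X] [TopologicalSpace X] [MeasurableSpace X] :
    Prop :=
  URP G X ∧ HasComparison G X

/-- The subequivalence `Σᵢ [A i] ≺ Σⱼ [B j]` in the type semigroup: for all closed sets
`C i ⊆ A i` there are a finite family of open sets `U k`, group elements `g k`, an
assignment `a` recording which `C i` the set `U k` helps to cover, and an assignment `b`
recording into which `B j` the translate `g k • U k` is placed, such that the translates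
assigned to a common `B j` are pairwise disjoint. -/
def FamSubeq (G : Type*) {X : Type*} [Group G] [MulAction G X] [TopologicalSpace X]
    {ι κ : Type*} [Fintype ι] [Fintype κ] (A : ι → Set X) (B : κ → Set X) : Prop :=
  ∀ C : ι → Set X, (∀ i, IsClosed (C i)) → (∀ i, C i ⊆ A i) →
    ∃ (n : ℕ) (U : Fin n → Set X) (g : Fin n → G) (a : Fin n → ι) (b : Fin n → κ),
      (∀ k, IsOpen (U k)) ∧
      (∀ i, C i ⊆ ⋃ (k) (_ : a k = i), U k) ∧
      (∀ k, g k • U k ⊆ B (b k)) ∧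
      (∀ k l, k ≠ l → b k = b l → Disjoint (g k • U k) (g l • U l))
/-- Property FCSB: the marker property holds and for every finite `F ⊆ G` and every marker
set `V` there are `F`-free open sets `U i` with
`Σᵢ [∂(U i)] + [X \ ⋃ᵢ U i] ≺ [V]` in the type semigroup, where, following the convention
for closed sets, the closed sets are replaced by (arbitrarily small) open neighbourhoods. -/
def FCSB (G X : Type*) [Group G] [MulAction G X] [TopologicalSpace X] : Prop :=
  MarkerProperty G X ∧
  ∀ (F : Finset G) (V : Set X), IsMarkerSet G V →
    ∃ (n : ℕ) (U : Fin n → Set X),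
      (∀ i, IsOpen (U i)) ∧ (∀ i, LFreeSet F (U i)) ∧
      ∃ (W : Fin n → Set X) (W0 : Set X),
        (∀ i, IsOpen (W i)) ∧ (∀ i, frontier (U i) ⊆ W i) ∧
        IsOpen W0 ∧ Set.univ \ (⋃ i, U i) ⊆ W0 ∧
        FamSubeq G (Sum.elim W fun _ : Fin 1 => W0) (fun _ : Fin 1 => V)

/-- Property FCSB in measure: for every finite `F ⊆ G` and `ε > 0` there are `F`-free open
sets `U i` with `Σᵢ μ(∂(U i)) + μ(X \ ⋃ᵢ U i) < ε` for every invariant probability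
measure `μ`. -/
def FCSBInMeasure (G X : Type*) [Group G] [MulAction G X] [TopologicalSpace X]
    [MeasurableSpace X] : Prop :=
  ∀ (F : Finset G) (ε : ℝ), 0 < ε →
    ∃ (n : ℕ) (U : Fin n → Set X),
      (∀ i, IsOpen (U i)) ∧ (∀ i, LFreeSet F (U i)) ∧
      ∀ μ : Measure X, InvariantProb G μ →
        (∑ i, (μ (frontier (U i))).toReal) + (μ (Set.univ \ ⋃ i, U i)).toReal < ε

/-!
Choose a finite `K ⊆ G` such that the sets `k⁻¹ • V`, `k ∈ K`, cover `X`. Since `G` is FC, the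
elements of `F ∪ K` have only finitely many conjugates altogether, and a marker set `M` that is
free for all of them has the property that *every* translate `c • M` is `(F ∪ K)`-free. The number
of translates `c i • M` needed to cover `X` is known only after `M` is chosen, but it is harmless:
`M` can be shrunk to superlevel sets `U i`, at different heights, of a single Urysohn function,
still with `⋃ i, c i • U i = X`. Their frontiers have pairwise disjoint neighbourhoods inside `M`,
so the `K`-freeness of `M` alone leaves room to send all of them disjointly into `V`.
-/

theorem conjugatesOf_eq_range {G : Type*} [Group G] (g : G) :
    conjugatesOf g = Set.range fun c : G => c * g * c⁻¹ :=
  Set.ext fun _ => isConj_iff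

theorem exists_isOpen_between_disjoint_nhds_frontier {X : Type*} [TopologicalSpace X]
    [NormalSpace X] {Z M : Set X} (hZ : IsClosed Z) (hM : IsOpen M) (hZM : Z ⊆ M) :
    ∃ U W : ℕ → Set X, (∀ i, IsOpen (U i) ∧ Z ⊆ U i ∧ U i ⊆ M) ∧
      (∀ i, IsOpen (W i) ∧ frontier (U i) ⊆ W i ∧ W i ⊆ M) ∧
      Pairwise (Function.onFun Disjoint W) := by
  obtain ⟨φ, hφM, hφZ, -⟩ := exists_continuous_zero_one_of_isClosed hM.isClosed_compl hZ
    (disjoint_compl_left_iff_subset.mpr hZM)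
  obtain ⟨t, ht, ht01, -⟩ := exists_seq_strictMono_tendsto' (zero_lt_one' ℝ)
  choose r hr using fun i => exists_between (ht (Nat.lt_succ_self i))
  have mem_of_pos : ∀ x, 0 < φ x → x ∈ M := fun x hx =>
    not_not.mp fun hxM => hx.ne' (hφM hxM)
  refine ⟨fun i => φ ⁻¹' Ioi (r i), fun i => φ ⁻¹' Ioo (t i) (t (i + 1)), fun i => ⟨?_, ?_, ?_⟩,
    fun i => ⟨?_, ?_, ?_⟩,
    fun i j hij => (ht.monotone.pairwise_disjoint_on_Ioo_succ hij).preimage φ⟩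
  · exact isOpen_Ioi.preimage φ.continuous
  · exact fun x hx => ((hr i).2.trans (ht01 _).2).trans_eq (hφZ hx).symm
  · exact fun x hx => mem_of_pos x (((ht01 i).1.trans (hr i).1).trans hx)
  · exact isOpen_Ioo.preimage φ.continuous
  · calc frontier (φ ⁻¹' Ioi (r i)) ⊆ φ ⁻¹' frontier (Ioi (r i)) :=
          φ.continuous.frontier_preimage_subset _
      _ ⊆ φ ⁻¹' Ioo (t i) (t (i + 1)) := preimage_mono (by simpa using hr i)
  · exact fun x hx => mem_of_pos x ((ht01 i).1.trans hx.1)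

section Action

variable {G X : Type*} [Group G] [MulAction G X]

theorem LFreeSet.mono {L L' : Finset G} {U U' : Set X} (h : LFreeSet L' U') (hL : L ⊆ L')
    (hU : U ⊆ U') : LFreeSet L U := fun g hg k hk hgk =>
  (h g (hL hg) k (hL hk) hgk).mono (smul_set_mono hU) (smul_set_mono hU)

theorem LFreeSet.smul_of_conj_mem {F L : Finset G} {U : Set X} (hU : LFreeSet L U) (c : G)
    (hFL : ∀ g ∈ F, c⁻¹ * g * c ∈ L) : LFreeSet F (c • U) := by
  intro g hg k hk hgk
  have smul_comm_conj : ∀ a : G, a • c • U = c • (c⁻¹ * a * c) • U := fun a => by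
    simp only [smul_smul, mul_assoc, mul_inv_cancel_left]
  rw [smul_comm_conj, smul_comm_conj, disjoint_smul_set]
  exact hU _ (hFL g hg) _ (hFL k hk) (by simpa using hgk)

variable [TopologicalSpace X]

theorem MarkerProperty.exists_isMarkerSet_lFreeSet_smul (hmarker : MarkerProperty G X)
    {F : Finset G} (hF : ∀ g ∈ F, (conjugatesOf g).Finite) :
    ∃ M : Set X, IsMarkerSet G M ∧ ∀ c : G, LFreeSet F (c • M) := by
  have hconj : (Group.conjugatesOfSet (F : Set G)).Finite := F.finite_toSet.biUnion hF
  obtain ⟨M, hM, hfree⟩ := hmarker hconj.toFinset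
  refine ⟨M, hM, fun c => hfree.smul_of_conj_mem c fun g hg => hconj.mem_toFinset.mpr ?_⟩
  exact Group.mem_conjugatesOfSet_iff.mpr ⟨g, hg, isConj_iff.mpr ⟨c⁻¹, by rw [inv_inv]⟩⟩

theorem FamSubeq.of_cover {α ι κ : Type*} [Finite α] [Fintype ι] [Fintype κ] {A : ι → Set X}
    {B : κ → Set X} (U : α → Set X) (g : α → G) (a : α → ι) (b : α → κ)
    (hU : ∀ k, IsOpen (U k)) (hA : ∀ i, A i ⊆ ⋃ (k) (_ : a k = i), U k)
    (hB : ∀ k, g k • U k ⊆ B (b k))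
    (hdisj : ∀ k l, k ≠ l → b k = b l → Disjoint (g k • U k) (g l • U l)) :
    FamSubeq G A B := by
  intro C _ hC
  let e := (Finite.equivFin α).symm
  refine ⟨_, U ∘ e, g ∘ e, a ∘ e, b ∘ e, fun k => hU _, fun i x hx => ?_, fun k => hB _,
    fun k l hkl => hdisj _ _ (e.injective.ne hkl)⟩
  obtain ⟨k, hk, hxk⟩ := mem_iUnion₂.mp (hA i (hC i hx))
  exact mem_iUnion₂.mpr ⟨e.symm k, by simpa using hk, by simpa using hxk⟩

theorem FamSubeq.sumElim_empty {ι ι' κ : Type*} [Fintype ι] [Fintype ι'] [Fintype κ]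
    {A : ι → Set X} {B : κ → Set X} (h : FamSubeq G A B) :
    FamSubeq G (Sum.elim A fun _ : ι' => ∅) B := by
  intro C hC hCA
  obtain ⟨n, U, g, a, b, hU, hcover, hB, hdisj⟩ :=
    h (C ∘ Sum.inl) (fun i => hC _) fun i => hCA (Sum.inl i)
  refine ⟨n, U, g, Sum.inl ∘ a, b, hU, ?_, hB, hdisj⟩
  rintro (i | i)
  · simpa only [Function.comp_apply, Sum.inl.injEq] using hcover i
  · exact (hCA (Sum.inr i)).trans (empty_subset _)

variable [ContinuousConstSMul G X]

/- The piece of `W i` lying in `k⁻¹ • V` is sent by `k` into `V`; pieces with the same `k` are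
kept apart by disjointness of the `W i`, pieces with different `k` by freeness of `M`. -/
theorem FamSubeq.smul_of_lFreeSet {ι : Type*} [Fintype ι] {K : Finset G} {M V : Set X}
    {W : ι → Set X} (hM : LFreeSet K M) (hV : IsOpen V) (hKV : ⋃ k ∈ K, k⁻¹ • V = univ)
    (hW : ∀ i, IsOpen (W i)) (hWM : ∀ i, W i ⊆ M) (hdisj : Pairwise (Function.onFun Disjoint W))
    (c : ι → G) : FamSubeq G (fun i => c i • W i) fun _ : Fin 1 => V := by
  have smul_piece : ∀ p : ι × K,
      ((p.2 : G) * (c p.1)⁻¹) • c p.1 • (W p.1 ∩ (p.2 : G)⁻¹ • V) = (p.2 : G) • W p.1 ∩ V :=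
    fun p => by rw [smul_smul, inv_mul_cancel_right, smul_set_inter, smul_inv_smul]
  refine .of_cover (fun p : ι × K => c p.1 • (W p.1 ∩ (p.2 : G)⁻¹ • V))
    (fun p => p.2 * (c p.1)⁻¹) Prod.fst (fun _ => 0) (fun p => ?_) (fun i => ?_) (fun p => ?_) ?_
  · exact ((hW _).inter (hV.smul _)).smul _
  · rintro _ ⟨x, hx, rfl⟩
    obtain ⟨k, hk, hxk⟩ := mem_iUnion₂.mp (hKV.ge (mem_univ x))
    exact mem_iUnion₂.mpr ⟨(i, ⟨k, hk⟩), rfl, smul_mem_smul_set ⟨hx, hxk⟩⟩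
  · exact (smul_piece p).trans_subset inter_subset_right
  · rintro ⟨i, k, hk⟩ ⟨j, l, hl⟩ hne -
    rw [smul_piece, smul_piece]
    refine Disjoint.mono inter_subset_left inter_subset_left ?_
    by_cases hkl : k = l
    · subst hkl
      exact disjoint_smul_set.mpr (hdisj fun hij => hne (Prod.ext hij rfl))
    · exact (hM k hk l hl hkl).mono (smul_set_mono (hWM i)) (smul_set_mono (hWM j))

variable [CompactSpace X]

theorem IsMarkerSet.exists_finset_iUnion_inv_smul {V : Set X} (hV : IsMarkerSet G V) :
    ∃ K : Finset G, ⋃ k ∈ K, k⁻¹ • V = univ := by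
  obtain ⟨K, hK⟩ := isCompact_univ.elim_finite_subcover (fun k : G => k⁻¹ • V)
    (fun k => hV.1.smul _) (((Equiv.inv G).iSup_comp (g := (· • V))).trans hV.2).ge
  exact ⟨K, univ_subset_iff.mp hK⟩

theorem IsMarkerSet.exists_isClosed_iUnion_smul [NormalSpace X] {M : Set X} (hM : IsMarkerSet G M) :
    ∃ (n : ℕ) (c : Fin n → G) (Z : Set X), IsClosed Z ∧ Z ⊆ M ∧ ⋃ i, c i • Z = univ := by
  obtain ⟨K, hK⟩ := hM.exists_finset_iUnion_inv_smul
  let c : Fin K.card → G := fun i => (K.equivFin.symm i : G)⁻¹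
  have hcover : ⋃ i, c i • M = univ := by
    rw [← hK, ← iUnion_subtype (· ∈ K) fun k => (k : G)⁻¹ • M]
    exact K.equivFin.symm.iSup_comp (g := fun k : K => (k : G)⁻¹ • M)
  obtain ⟨Y, hYcover, hY, hYM⟩ := exists_iUnion_eq_closed_subset (fun i => hM.1.smul (c i))
    (fun _ => toFinite _) hcover
  refine ⟨_, c, ⋃ i, (c i)⁻¹ • Y i, isClosed_iUnion_of_finite fun i => (hY i).smul _,
    iUnion_subset fun i => ?_, univ_subset_iff.mp ?_⟩
  · exact subset_smul_set_iff.mp (by simpa using hYM i)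
  · rw [← hYcover]
    exact iUnion_mono fun i => subset_smul_set_iff.mpr
      (subset_iUnion (fun i => (c i)⁻¹ • Y i) i)

end Action

theorem fc_markerProperty_implies_fcsb_general {G X : Type*} [Group G] [TopologicalSpace X]
    [CompactSpace X] [NormalSpace X] [MulAction G X] [ContinuousConstSMul G X]
    (hFC : ∀ g : G, (Set.range fun c : G => c * g * c⁻¹).Finite)
    (hmarker : MarkerProperty G X) : FCSB G X := by
  classical
  refine ⟨hmarker, fun F V hV => ?_⟩
  obtain ⟨K, hKV⟩ := hV.exists_finset_iUnion_inv_smul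
  obtain ⟨M, hM, hfree⟩ := hmarker.exists_isMarkerSet_lFreeSet_smul (F := F ∪ K)
    fun g _ => conjugatesOf_eq_range g ▸ hFC g
  have hMK : LFreeSet K M := one_smul G M ▸ (hfree 1).mono Finset.subset_union_right Subset.rfl
  obtain ⟨n, c, Z, hZ, hZM, hcZ⟩ := hM.exists_isClosed_iUnion_smul
  obtain ⟨U, W, hU, hW, hWdisj⟩ := exists_isOpen_between_disjoint_nhds_frontier hZ hM.1 hZM
  have hcU : ⋃ i, c i • U i = univ :=
    univ_subset_iff.mp (hcZ.symm.trans_subset (iUnion_mono fun i => smul_set_mono (hU i).2.1))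
  have hcW : FamSubeq G (fun i => c i • W i) fun _ : Fin 1 => V :=
    .smul_of_lFreeSet (W := fun i : Fin n => W i) hMK hV.1 hKV (fun i => (hW i).1)
      (fun i => (hW i).2.2) (fun _ _ hij => hWdisj (Fin.val_injective.ne hij)) c
  refine ⟨n, fun i => c i • U i, fun i => (hU i).1.smul _,
    fun i => (hfree (c i)).mono Finset.subset_union_left (smul_set_mono (hU i).2.2),
    fun i => c i • W i, ∅, fun i => (hW i).1.smul _, fun i => ?_, isOpen_empty,
    (sdiff_eq_empty.mpr hcU.ge).subset, hcW.sumElim_empty⟩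
  exact ((Homeomorph.smul (c i)).image_frontier (U i)).symm.trans_subset
    (smul_set_mono (hW i).2.1)

/-- A free action of a countably infinite FC group with the marker
property has property FCSB. -/
theorem fc_markerProperty_implies_fcsb {G X : Type*} [Group G] [Countable G] [Infinite G]
    [TopologicalSpace X] [CompactSpace X] [TopologicalSpace.MetrizableSpace X]
    [MulAction G X] [ContinuousConstSMul G X]
    (hFC : ∀ g : G, (Set.range fun c : G => c * g * c⁻¹).Finite)
    (hfree : ∀ (g : G) (x : X), g • x = x → g = 1)
    (hmarker : MarkerProperty G X) :
    FCSB G X :=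
  fc_markerProperty_implies_fcsb_general hFC hmarker
end

section
/- Let g be a homeomorphism of a compact metrizable space X, generating an action of the cyclic group ⟨g⟩ on X. Let {U_i}_{i=1}^n be a collection of open {e,g}-free sets and let δ > 0. Then there exist open {e,g}-free sets V_1, V_2, V_3 whose closures are pairwise disjoint such that [∂V_1] + [∂V_2] + [∂V_3] + [X \ (V_1 ∪ V_2 ∪ V_3)] ≺ 8·(Σ_{i=1}^n [(∂U_i)^δ] + [X \ ⋃_{i=1}^n U_i^{-δ}]) in the type semigroup of the ⟨g⟩-action. -/
open Set MeasureTheory Pointwise Topology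

/-- The inner set `A^{-δ} = {x : ρ(x, X \ A) > δ}`. -/
def innerSet {X : Type*} [MetricSpace X] (δ : ℝ) (A : Set X) : Set X :=
  (Metric.cthickening δ Aᶜ)ᶜ

/-!
Fix levels `… < s (-1) < s 0 < s 1 < …` strictly between `0` and `δ`, and shrink `U i` to the sets
`W i k` of its points at distance more than `s (2 * k)` from `∂(U i)`. Along the orbit of a point
`x`, colour the times `k` with `g ^ k • x ∈ W i k` greedily with three colours, for one `i` after
the other. Since `U i` is `{e, g}`-free, consecutive times get different colours, and the colour at
time `k` depends only on the times within `n` of `k`. The colour at time `0` therefore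
defines three `{e, g}`-free open sets covering `⋃ i, W i 0`, except for the points that some
`g ^ k` with `|k| ≤ n + 1` moves into the difference of consecutive `W i`.

Using a different level at each time is what bounds the multiplicity independently of `n`: the
differences lie in shells around `∂(U i)` of which only adjacent ones overlap, so that two copies of
`(∂(U i))^δ` hold all of them. The factor `8` is two copies for each of the three frontiers and
the remainder, as all four sit near the points left uncovered.
-/

section Coloring

/-- A colour other than the colours `a` and `b` of the two neighbours of a point. -/
def otherColor (a b : Option (Fin 3)) : Fin 3 :=
  if a ≠ some 0 ∧ b ≠ some 0 then 0 else if a ≠ some 1 ∧ b ≠ some 1 then 1 else 2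

theorem some_otherColor_ne_left : ∀ a b, some (otherColor a b) ≠ a := by decide

theorem some_otherColor_ne_right : ∀ a b, some (otherColor a b) ≠ b := by decide

open Classical in
/-- The greedy 3-colouring of the path `ℤ` along the sets `A 0, …, A (n - 1)`: starting from the
last one, each set colours those of its points that have no colour yet, avoiding the colours which
their two neighbours have received from the sets processed before. The value `none` means
uncoloured. -/
noncomputable def greedyColor : {n : ℕ} → (Fin n → Set ℤ) → ℤ → Option (Fin 3)
  | 0, _, _ => none
  | _ + 1, A, k =>
    (greedyColor (Fin.tail A) k).or <|
      if k ∈ A 0 then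
        some (otherColor (greedyColor (Fin.tail A) (k - 1)) (greedyColor (Fin.tail A) (k + 1)))
      else none

theorem greedyColor_succ_eq_some_iff {n : ℕ} {A : Fin (n + 1) → Set ℤ} {k : ℤ} {c : Fin 3} :
    greedyColor A k = some c ↔ greedyColor (Fin.tail A) k = some c ∨
      greedyColor (Fin.tail A) k = none ∧ k ∈ A 0 ∧
        otherColor (greedyColor (Fin.tail A) (k - 1)) (greedyColor (Fin.tail A) (k + 1)) = c := by
  simp [greedyColor, Option.or_eq_some_iff]

theorem greedyColor_ne_none_of_mem {n : ℕ} {A : Fin n → Set ℤ} {k : ℤ} {i : Fin n}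
    (hk : k ∈ A i) : greedyColor A k ≠ none := by
  induction n with
  | zero => exact i.elim0
  | succ n ih =>
    cases i using Fin.cases with
    | zero => simp [greedyColor, hk]
    | succ i => simp [greedyColor, ih (A := Fin.tail A) hk]

theorem greedyColor_congr {n : ℕ} {A B : Fin n → Set ℤ} {k c : ℤ}
    (h : ∀ i, ∀ l ∈ Icc (k - n) (k + n), l ∈ A i ↔ l + c ∈ B i) :
    greedyColor A k = greedyColor B (k + c) := by
  induction n generalizing k with
  | zero => rfl
  | succ n ih =>
    have tail_eq (j : ℤ) (hj : j ∈ Icc (k - 1) (k + 1)) :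
        greedyColor (Fin.tail A) j = greedyColor (Fin.tail B) (j + c) :=
      ih fun i l hl ↦ h i.succ l (by grind)
    have mem_iff : k ∈ A 0 ↔ k + c ∈ B 0 := h 0 k (by grind)
    refine Option.ext fun a ↦ ?_
    simp only [greedyColor_succ_eq_some_iff, mem_iff, tail_eq k (by grind),
      tail_eq (k - 1) (by grind), tail_eq (k + 1) (by grind), sub_add_eq_add_sub,
      add_right_comm k 1 c]

theorem greedyColor_add_one_ne {n : ℕ} {A : Fin n → Set ℤ}
    (hA : ∀ i, ∀ k ∈ A i, k + 1 ∉ A i) {k : ℤ} {c : Fin 3} (hk : greedyColor A k = some c) :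
    greedyColor A (k + 1) ≠ some c := by
  induction n with
  | zero => simp [greedyColor] at hk
  | succ n ih =>
    intro hk'
    rw [greedyColor_succ_eq_some_iff] at hk hk'
    rcases hk with hk | ⟨-, hkA, rfl⟩ <;> rcases hk' with hk' | ⟨-, hkA', hc⟩
    · exact ih (fun i ↦ hA i.succ) hk hk'
    · rw [add_sub_cancel_right, ← Option.some_inj] at hc
      exact some_otherColor_ne_left _ _ (hc.trans hk.symm)
    · exact some_otherColor_ne_right _ _ hk'.symm
    · exact hA 0 k hkA hkA'

end Coloring

section OrbitColoring

open Multiplicative (ofAdd)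

theorem eventually_mem_iff_of_notMem_frontier {X : Type*} [TopologicalSpace X] {S : Set X} {x : X}
    (hx : x ∉ frontier S) : ∀ᶠ y in 𝓝 x, (y ∈ S ↔ x ∈ S) := by
  by_cases hxS : x ∈ S
  · have hint : x ∈ interior S := by_contra fun h ↦ hx ⟨subset_closure hxS, h⟩
    filter_upwards [mem_interior_iff_mem_nhds.1 hint] with y hy using iff_of_true hy hxS
  · have hcl : x ∉ closure S := fun h ↦ hx ⟨h, fun h' ↦ hxS (interior_subset h')⟩
    filter_upwards [isClosed_closure.isOpen_compl.mem_nhds hcl] with y hy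
      using iff_of_false (fun h ↦ hy (subset_closure h)) hxS

variable {X : Type*} [MulAction (Multiplicative ℤ) X] {n : ℕ}

/-- The times at which the orbit of `x` visits the sets `W i`, where `W i k` is the set to be
visited at time `k`. -/
def visitTimes (W : Fin n → ℤ → Set X) (x : X) (i : Fin n) : Set ℤ :=
  {k | ofAdd k • x ∈ W i k}

/-- The colour of `x` in the greedy colouring of its orbit along the visits to the `W i`. -/
noncomputable def orbitColor (W : Fin n → ℤ → Set X) (x : X) : Option (Fin 3) :=
  greedyColor (visitTimes W x) 0

theorem add_one_notMem_visitTimes {W : Fin n → ℤ → Set X} {U : Fin n → Set X}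
    (hWU : ∀ i k, W i k ⊆ U i) (hU : ∀ i, Disjoint (U i) (ofAdd (1 : ℤ) • U i)) (x : X)
    (i : Fin n) (k : ℤ) (hk : k ∈ visitTimes W x i) : k + 1 ∉ visitTimes W x i := by
  intro hk'
  refine disjoint_left.1 (hU i) (hWU i _ hk') ⟨_, hWU i _ hk, ?_⟩
  simp only [smul_smul, ← ofAdd_add, add_comm]

variable [TopologicalSpace X]

/-- The points of `X` whose orbit meets, at some time `k` relevant to their own colour or to that of
their successor, the set `closure (W i (k - 1)) \ W i k`, on which the visits to `W i` are unstable
under perturbing the point or shifting the time. -/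
def unstableSet (W : Fin n → ℤ → Set X) : Set X :=
  ⋃ i, ⋃ k ∈ Icc (-n : ℤ) (n + 1), (ofAdd k)⁻¹ • (closure (W i (k - 1)) \ W i k)

/-- The points outside the unstable set whose colour is `c`. -/
def colorClass (W : Fin n → ℤ → Set X) (c : Fin 3) : Set X :=
  {x | x ∉ unstableSet W ∧ orbitColor W x = some c}

theorem smul_notMem_of_notMem_unstableSet {W : Fin n → ℤ → Set X} {x : X}
    (hx : x ∉ unstableSet W) (i : Fin n) {k : ℤ} (hk : k ∈ Icc (-n : ℤ) (n + 1)) :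
    ofAdd k • x ∉ closure (W i (k - 1)) \ W i k := fun h ↦
  hx <| mem_iUnion_of_mem i <| mem_iUnion₂_of_mem hk <| mem_inv_smul_set_iff.2 h

theorem orbitColor_ofAdd_one_smul {W : Fin n → ℤ → Set X} (hWanti : ∀ i, Antitone (W i)) {x : X}
    (hx : x ∉ unstableSet W) :
    orbitColor W (ofAdd (1 : ℤ) • x) = greedyColor (visitTimes W x) 1 := by
  refine greedyColor_congr (k := 0) (c := 1) fun i l hl ↦ ?_
  have hstable := smul_notMem_of_notMem_unstableSet hx i (k := l + 1) (by grind)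
  rw [add_sub_cancel_right] at hstable
  simp only [visitTimes, mem_ofPred_eq, smul_smul, ← ofAdd_add]
  exact ⟨fun h ↦ by_contra fun h' ↦ hstable ⟨subset_closure h, h'⟩,
    fun h ↦ hWanti i (by lia) h⟩

theorem disjoint_colorClass_smul {W : Fin n → ℤ → Set X} (hWanti : ∀ i, Antitone (W i))
    {U : Fin n → Set X} (hWU : ∀ i k, W i k ⊆ U i)
    (hU : ∀ i, Disjoint (U i) (ofAdd (1 : ℤ) • U i)) (c : Fin 3) :
    Disjoint (colorClass W c) (ofAdd (1 : ℤ) • colorClass W c) := by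
  rw [disjoint_right]
  rintro _ ⟨x, ⟨hx, hxc⟩, rfl⟩ ⟨-, hxc'⟩
  exact greedyColor_add_one_ne (add_one_notMem_visitTimes hWU hU x) hxc
    ((orbitColor_ofAdd_one_smul hWanti hx).symm.trans hxc')

theorem pairwise_disjoint_colorClass (W : Fin n → ℤ → Set X) :
    Pairwise fun c c' ↦ Disjoint (colorClass W c) (colorClass W c') := fun _ _ hne ↦
  disjoint_left.2 fun _ hx hx' ↦ hne <| Option.some.inj <| hx.2.symm.trans hx'.2

theorem compl_iUnion_colorClass_subset (W : Fin n → ℤ → Set X) :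
    (⋃ c, colorClass W c)ᶜ ⊆ unstableSet W ∪ (⋃ i, W i 0)ᶜ := by
  intro x hx
  by_contra hx'
  simp only [mem_union, mem_compl_iff, not_or, not_not, mem_iUnion] at hx'
  obtain ⟨hstable, i, hi⟩ := hx'
  have hvisit : 0 ∈ visitTimes W x i := by simpa [visitTimes] using hi
  obtain ⟨c, hc⟩ := Option.ne_none_iff_exists'.1 (greedyColor_ne_none_of_mem hvisit)
  exact hx (mem_iUnion_of_mem c ⟨hstable, hc⟩)

variable [ContinuousConstSMul (Multiplicative ℤ) X]

theorem isClosed_unstableSet {W : Fin n → ℤ → Set X} (hWopen : ∀ i k, IsOpen (W i k)) :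
    IsClosed (unstableSet W) :=
  isClosed_iUnion_of_finite fun i ↦ (finite_Icc _ _).isClosed_biUnion fun k _ ↦
    (isClosed_closure.sdiff (hWopen i k)).smul _

theorem eventually_orbitColor_eq {W : Fin n → ℤ → Set X} (hWopen : ∀ i k, IsOpen (W i k))
    (hWanti : ∀ i, Antitone (W i)) {x : X} (hx : x ∉ unstableSet W) :
    ∀ᶠ y in 𝓝 x, orbitColor W y = orbitColor W x := by
  have hvisits : ∀ᶠ y in 𝓝 x, ∀ k ∈ Icc (-n : ℤ) (n + 1), ∀ i,
      k ∈ visitTimes W y i ↔ k ∈ visitTimes W x i := by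
    refine (Filter.eventually_all_finite (finite_Icc _ _)).2 fun k hk ↦
      Filter.eventually_all.2 fun i ↦
        (continuous_const_smul (ofAdd k)).continuousAt.eventually
          (eventually_mem_iff_of_notMem_frontier (S := W i k) fun hfr ↦
            smul_notMem_of_notMem_unstableSet hx i hk ?_)
    rw [(hWopen i k).frontier_eq] at hfr
    exact ⟨closure_mono (hWanti i (by lia)) hfr.1, hfr.2⟩
  filter_upwards [hvisits] with y hy
  exact greedyColor_congr (k := 0) (c := 0) fun i l hl ↦ by simpa using hy l (by grind) i

theorem isOpen_colorClass {W : Fin n → ℤ → Set X} (hWopen : ∀ i k, IsOpen (W i k))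
    (hWanti : ∀ i, Antitone (W i)) (c : Fin 3) : IsOpen (colorClass W c) := by
  refine isOpen_iff_mem_nhds.2 fun x ⟨hx, hxc⟩ ↦ ?_
  filter_upwards [eventually_orbitColor_eq hWopen hWanti hx,
    (isClosed_unstableSet hWopen).isOpen_compl.mem_nhds hx] with y hyx hy
  exact ⟨hy, hyx.trans hxc⟩

end OrbitColoring

section Shrinking

variable {X ι : Type*} [TopologicalSpace X]

theorem frontier_subset_compl_iUnion {V : ι → Set X} (hV : ∀ i, IsOpen (V i))
    (hdisj : Pairwise fun i j ↦ Disjoint (V i) (V j)) (i : ι) :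
    frontier (V i) ⊆ (⋃ j, V j)ᶜ := by
  rw [subset_compl_iff_disjoint_right, disjoint_iUnion_right]
  intro j
  rcases eq_or_ne i j with rfl | hij
  · exact (disjoint_iff_inter_eq_empty.2 (hV i).inter_frontier_eq).symm
  · exact ((hdisj hij).closure_left (hV j)).mono_left frontier_subset_closure

theorem exists_open_subset_pairwise_disjoint_closure [NormalSpace X] {V : ι → Set X}
    (hV : ∀ i, IsOpen (V i)) (hdisj : Pairwise fun i j ↦ Disjoint (V i) (V j))
    {O : Set X} (hO : IsOpen O) (hVO : (⋃ i, V i)ᶜ ⊆ O) :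
    ∃ V' : ι → Set X, (∀ i, IsOpen (V' i)) ∧ (∀ i, V' i ⊆ V i) ∧
      (Pairwise fun i j ↦ Disjoint (closure (V' i)) (closure (V' j))) ∧ (⋃ i, V' i)ᶜ ⊆ O := by
  obtain ⟨N, hN, hVN, hNO⟩ :=
    normal_exists_closure_subset (isOpen_iUnion hV).isClosed_compl hO hVO
  have closure_subset (i : ι) : closure (V i \ closure N) ⊆ V i := by
    intro x hx
    have hxN : x ∉ N := fun h ↦
      disjoint_left.1 ((disjoint_sdiff_left.mono_right subset_closure).closure_left hN) hx h
    obtain ⟨j, hj⟩ := mem_iUnion.1 (not_not.1 fun h ↦ hxN (hVN h))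
    obtain rfl : i = j := by_contra fun hij ↦
      disjoint_left.1 ((hdisj hij).closure_left (hV j)) (closure_mono sdiff_subset hx) hj
    exact hj
  refine ⟨fun i ↦ V i \ closure N, fun i ↦ (hV i).sdiff isClosed_closure, fun i ↦ sdiff_subset,
    fun i j hij ↦ (hdisj hij).mono (closure_subset i) (closure_subset j), fun x hx ↦ hNO ?_⟩
  by_contra hxN
  obtain ⟨i, hi⟩ := mem_iUnion.1 (not_not.1 fun h ↦ hxN (subset_closure (hVN h)))
  exact hx (mem_iUnion_of_mem i ⟨hi, hxN⟩)

end Shrinking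

theorem exists_open_coloring_of_unstableSet_subset {X : Type*} [TopologicalSpace X] [NormalSpace X]
    [MulAction (Multiplicative ℤ) X] [ContinuousConstSMul (Multiplicative ℤ) X] {n : ℕ}
    {W : Fin n → ℤ → Set X} (hWopen : ∀ i k, IsOpen (W i k)) (hWanti : ∀ i, Antitone (W i))
    {U : Fin n → Set X} (hWU : ∀ i k, W i k ⊆ U i)
    (hU : ∀ i, Disjoint (U i) (Multiplicative.ofAdd (1 : ℤ) • U i))
    {O : Set X} (hO : IsOpen O) (hWO : unstableSet W ∪ (⋃ i, W i 0)ᶜ ⊆ O) :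
    ∃ V : Fin 3 → Set X, (∀ c, IsOpen (V c)) ∧
      (∀ c, Disjoint (V c) (Multiplicative.ofAdd (1 : ℤ) • V c)) ∧
      (Pairwise fun c c' ↦ Disjoint (closure (V c)) (closure (V c'))) ∧ (⋃ c, V c)ᶜ ⊆ O := by
  obtain ⟨V, hV, hVsub, hVdisj, hVO⟩ := exists_open_subset_pairwise_disjoint_closure
    (isOpen_colorClass hWopen hWanti) (pairwise_disjoint_colorClass W) hO
    ((compl_iUnion_colorClass_subset W).trans hWO)
  exact ⟨V, hV, fun c ↦ (disjoint_colorClass_smul hWanti hWU hU c).mono (hVsub c)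
    (smul_set_mono (hVsub c)), hVdisj, hVO⟩

theorem exists_thickening_frontier_and_remainder_subset {X ι κ : Type*} [PseudoMetricSpace X]
    [CompactSpace X] {V : ι → Set X} (hV : ∀ i, IsOpen (V i))
    (hdisj : Pairwise fun i j ↦ Disjoint (V i) (V j)) {O : Set X} (hO : IsOpen O)
    (hVO : (⋃ i, V i)ᶜ ⊆ O) :
    ∃ η > 0, ∀ ε ≤ η, ∀ q : ι ⊕ κ,
      Sum.elim (fun i ↦ Metric.thickening ε (frontier (V i)))
        (fun _ ↦ Metric.thickening ε (univ \ ⋃ i, V i)) q ⊆ O := by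
  obtain ⟨η, hη, hηO⟩ :=
    (isOpen_iUnion hV).isClosed_compl.isCompact.exists_thickening_subset_open hO hVO
  refine ⟨η, hη, fun ε hε ↦ Sum.forall.2 ⟨fun i ↦ ?_, fun _ ↦ ?_⟩⟩
  · exact (Metric.thickening_mono hε _).trans <|
      (Metric.thickening_subset_of_subset _ (frontier_subset_compl_iUnion hV hdisj i)).trans hηO
  · rw [Sum.elim_inr, ← compl_eq_univ_sdiff]
    exact (Metric.thickening_mono hε _).trans hηO

section Inset

open Metric
open scoped ENNReal

theorem exists_strictMono_int_mem_Ioo {α : Type*} [LinearOrder α] [DenselyOrdered α] {a b : α}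
    (hab : a < b) : ∃ s : ℤ → α, StrictMono s ∧ ∀ k, s k ∈ Ioo a b := by
  have : Nontrivial (Ioo a b) := by
    obtain ⟨c, hac, hcb⟩ := exists_between hab
    obtain ⟨d, hcd, hdb⟩ := exists_between hcb
    exact ⟨⟨c, hac, hcb⟩, ⟨d, hac.trans hcd, hdb⟩, fun h ↦ hcd.ne (congrArg Subtype.val h)⟩
  obtain ⟨f⟩ := Order.embedding_from_countable_to_dense ℤ (Ioo a b)
  exact ⟨fun k ↦ f k, fun k l hkl ↦ f.strictMono hkl, fun k ↦ (f k).2⟩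

variable {X : Type*} [PseudoEMetricSpace X]

/-- The points of `U` at distance more than `c` from the frontier of `U`. Unlike the distance to
`Uᶜ`, this makes `U \ inset c U` a subset of the `c`-neighbourhood of the frontier; the extended
distance is infinite when the frontier is empty. -/
def inset (c : ℝ≥0∞) (U : Set X) : Set X :=
  {x | x ∈ U ∧ c < infEDist x (frontier U)}

/-- The points, on either side of the frontier of `U`, whose distance to it lies strictly between
`a` and `b`. -/
def collar (a b : ℝ≥0∞) (U : Set X) : Set X :=
  {x | infEDist x (frontier U) ∈ Ioo a b}

theorem inset_subset (c : ℝ≥0∞) (U : Set X) : inset c U ⊆ U := fun _ hx ↦ hx.1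

theorem inset_antitone (U : Set X) : Antitone fun c ↦ inset c U := fun _ _ hcd _ hx ↦
  ⟨hx.1, hcd.trans_lt hx.2⟩

theorem isOpen_inset {U : Set X} (hU : IsOpen U) (c : ℝ≥0∞) : IsOpen (inset c U) :=
  hU.inter (isOpen_lt continuous_const continuous_infEDist)

theorem isOpen_collar (a b : ℝ≥0∞) (U : Set X) : IsOpen (collar a b U) :=
  isOpen_Ioo.preimage continuous_infEDist

theorem disjoint_collar {a b a' b' : ℝ≥0∞} (hb : b ≤ a') (U : Set X) :
    Disjoint (collar a b U) (collar a' b' U) :=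
  disjoint_left.2 fun _ hx hx' ↦ (hx.2.trans_le hb).not_gt hx'.1

theorem closure_inset_subset_inset {U : Set X} (hU : IsOpen U) {c d : ℝ≥0∞} (hcd : c < d) :
    closure (inset d U) ⊆ inset c U := by
  intro x hx
  have hle : d ≤ infEDist x (frontier U) :=
    closure_minimal (fun y hy ↦ hy.2.le) (isClosed_le continuous_const continuous_infEDist) hx
  have hfr : x ∉ frontier U := fun h ↦
    (hcd.trans_le hle).not_ge (infEDist_zero_of_mem h ▸ zero_le)
  rw [hU.frontier_eq] at hfr
  exact ⟨by_contra fun h ↦ hfr ⟨closure_mono (inset_subset d U) hx, h⟩, hcd.trans_le hle⟩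

theorem closure_inset_diff_inset_subset_collar {U : Set X} (hU : IsOpen U) {a b c d : ℝ≥0∞}
    (hab : a < b) (hcd : c < d) : closure (inset b U) \ inset c U ⊆ collar a d U := by
  rintro x ⟨hxb, hxc⟩
  obtain ⟨hxU, hax⟩ := closure_inset_subset_inset hU hab hxb
  exact ⟨hax, (not_lt.1 fun h ↦ hxc ⟨hxU, h⟩).trans_lt hcd⟩

theorem collar_subset_thickening {δ : ℝ} {b : ℝ≥0∞}
    (hb : b ≤ ENNReal.ofReal δ) (a : ℝ≥0∞) (U : Set X) :
    collar a b U ⊆ thickening δ (frontier U) := fun _ hx ↦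
  mem_thickening_iff_infEDist_lt.2 (hx.2.trans_le hb)

end Inset

section InsetChain

open Metric
open scoped ENNReal

variable {X : Type*} [MetricSpace X] {δ : ℝ} {U : Set X}

theorem innerSet_subset_inset (hU : IsOpen U) {c : ℝ≥0∞} (hc : c ≤ ENNReal.ofReal δ) :
    innerSet δ U ⊆ inset c U := by
  intro x hx
  have hlt : ENNReal.ofReal δ < infEDist x Uᶜ := not_le.1 fun h ↦ hx (mem_cthickening_iff.2 h)
  have hxU : x ∈ U := by_contra fun h ↦ by simp [infEDist_zero_of_mem (mem_compl h)] at hlt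
  have hfr : frontier U ⊆ Uᶜ := hU.frontier_eq ▸ fun y hy ↦ hy.2
  exact ⟨hxU, hc.trans_lt (hlt.trans_le (infEDist_anti hfr))⟩

/-- A decreasing two-sided sequence of open sets squeezed between `innerSet δ U` and `U`, together
with open neighbourhoods `gap k`, contained in `(∂U)^δ`, of the differences between consecutive
terms, of which only adjacent ones may overlap. -/
structure InsetChain (δ : ℝ) (U : Set X) where
  stage : ℤ → Set X
  isOpen_stage : ∀ k, IsOpen (stage k)
  stage_subset : ∀ k, stage k ⊆ U
  innerSet_subset : ∀ k, innerSet δ U ⊆ stage k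
  closure_subset : ∀ {k l}, k < l → closure (stage l) ⊆ stage k
  gap : ℤ → Set X
  isOpen_gap : ∀ k, IsOpen (gap k)
  closure_diff_subset_gap : ∀ k, closure (stage (k - 1)) \ stage k ⊆ gap k
  gap_subset : ∀ k, gap k ⊆ thickening δ (frontier U)
  disjoint_gap : ∀ {k l}, k + 2 ≤ l → Disjoint (gap k) (gap l)

theorem InsetChain.antitone (W : InsetChain δ U) : Antitone W.stage :=
  antitone_iff_forall_lt.2 fun _ _ hkl ↦ subset_closure.trans (W.closure_subset hkl)

theorem nonempty_insetChain (hU : IsOpen U) (hδ : 0 < δ) :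
    Nonempty (InsetChain δ U) := by
  obtain ⟨s, hs, hsδ⟩ := exists_strictMono_int_mem_Ioo (ENNReal.ofReal_pos.2 hδ)
  exact ⟨{
    stage k := inset (s (2 * k)) U
    isOpen_stage k := isOpen_inset hU _
    stage_subset k := inset_subset _ U
    innerSet_subset k := innerSet_subset_inset hU (hsδ _).2.le
    closure_subset hkl := closure_inset_subset_inset hU (hs (by lia))
    gap k := collar (s (2 * k - 3)) (s (2 * k + 1)) U
    isOpen_gap k := isOpen_collar _ _ U
    closure_diff_subset_gap k :=
      closure_inset_diff_inset_subset_collar hU (hs (by lia)) (hs (by lia))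
    gap_subset k := collar_subset_thickening (hsδ _).2.le _ U
    disjoint_gap hkl := disjoint_collar (hs.monotone (by lia)) U }⟩

theorem exists_isOpen_compl_iUnion_stage_subset {ι : Type*} [Finite ι] {U : ι → Set X}
    (W : ∀ i, InsetChain δ (U i)) (k : ℤ) :
    ∃ M : Set X, IsOpen M ∧ (⋃ i, (W i).stage k)ᶜ ⊆ M ∧ M ⊆ univ \ ⋃ i, innerSet δ (U i) := by
  refine ⟨(⋃ i, closure ((W i).stage (k + 1)))ᶜ,
    (isClosed_iUnion_of_finite fun i ↦ isClosed_closure).isOpen_compl,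
    compl_subset_compl.2 <| iUnion_mono fun i ↦ (W i).closure_subset (lt_add_one k), ?_⟩
  rw [← compl_eq_univ_sdiff]
  exact compl_subset_compl.2 <| iUnion_mono fun i ↦
    ((W i).innerSet_subset _).trans subset_closure

end InsetChain

section FamSubeq

variable {G X ι κ : Type*} [Group G] [MulAction G X] [TopologicalSpace X] [Fintype ι] [Fintype κ]

theorem famSubeq_of_forall_exists_cover {A : ι → Set X} {B : κ → Set X}
    (h : ∀ C : ι → Set X, (∀ i, IsClosed (C i)) → (∀ i, C i ⊆ A i) →
      ∃ (P : Type*) (_ : Finite P) (W : P → Set X) (γ : P → G) (a : P → ι) (b : P → κ),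
        (∀ p, IsOpen (W p)) ∧ (∀ i, C i ⊆ ⋃ (p) (_ : a p = i), W p) ∧
        (∀ p, γ p • W p ⊆ B (b p)) ∧
        ∀ p q, p ≠ q → b p = b q → Disjoint (γ p • W p) (γ q • W q)) :
    FamSubeq G A B := by
  intro C hC hCA
  obtain ⟨P, _, W, γ, a, b, hW, hcov, hsub, hdisj⟩ := h C hC hCA
  obtain ⟨m, ⟨e⟩⟩ := Finite.exists_equiv_fin P
  refine ⟨m, W ∘ e.symm, γ ∘ e.symm, a ∘ e.symm, b ∘ e.symm, fun k ↦ hW _, fun i ↦ ?_,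
    fun k ↦ hsub _, fun k l hkl ↦ hdisj _ _ (e.symm.injective.ne hkl)⟩
  refine (hcov i).trans (iUnion₂_subset fun p hp ↦ ?_)
  exact subset_iUnion₂_of_subset (e p) (by simpa using hp) (by simp)

theorem FamSubeq.mono_left {A A' : ι → Set X} {B : κ → Set X} (h : FamSubeq G A B)
    (hA : ∀ i, A' i ⊆ A i) : FamSubeq G A' B := fun C hC hCA ↦
  h C hC fun i ↦ (hCA i).trans (hA i)

theorem FamSubeq.mono_right {κ' : Type*} [Fintype κ'] {A : ι → Set X} {B : κ → Set X}
    {B' : κ' → Set X} (h : FamSubeq G A B) {f : κ → κ'} (hf : Function.Injective f)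
    (hB : ∀ j, B j ⊆ B' (f j)) : FamSubeq G A B' := by
  intro C hC hCA
  obtain ⟨m, W, γ, a, b, hW, hcov, hsub, hdisj⟩ := h C hC hCA
  exact ⟨m, W, γ, a, f ∘ b, hW, hcov, fun k ↦ (hsub k).trans (hB _),
    fun k l hkl hb ↦ hdisj k l hkl (hf hb)⟩

theorem famSubeq_prod_of_forall {A : ι → Set X} {B : κ → Set X}
    (h : ∀ i, FamSubeq G (fun _ : Unit ↦ A i) B) :
    FamSubeq G A (fun p : ι × κ ↦ B p.2) := by
  refine famSubeq_of_forall_exists_cover fun C hC hCA ↦ ?_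
  choose m W γ a b hW hcov hsub hdisj using
    fun i ↦ h i (fun _ ↦ C i) (fun _ ↦ hC i) (fun _ ↦ hCA i)
  refine ⟨Σ i, Fin (m i), inferInstance, fun p ↦ W p.1 p.2, fun p ↦ γ p.1 p.2, Sigma.fst,
    fun p ↦ (p.1, b p.1 p.2), fun p ↦ hW _ _, fun i ↦ ?_, fun p ↦ hsub _ _, ?_⟩
  · refine (hcov i ()).trans (iUnion₂_subset fun k _ ↦ ?_)
    exact subset_iUnion₂_of_subset (⟨i, k⟩ : Σ i, Fin (m i)) rfl subset_rfl
  · rintro ⟨i, k⟩ ⟨j, l⟩ hne hb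
    obtain ⟨rfl, hb⟩ := Prod.mk.inj hb
    exact hdisj i k l (fun hkl ↦ hne (hkl ▸ rfl)) hb

theorem FamSubeq.copies_of_card_le {P Q : Type*} [Fintype P] [Fintype Q] {O : Set X}
    {A : ι → Set X} {B : κ → Set X}
    (h : FamSubeq G (fun _ : Unit ↦ O) (fun p : P × κ ↦ B p.2)) (hA : ∀ i, A i ⊆ O)
    (hcard : Fintype.card (ι × P) ≤ Fintype.card Q) :
    FamSubeq G A (fun p : Q × κ ↦ B p.2) := by
  obtain ⟨f⟩ := Function.Embedding.nonempty_of_card_le hcard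
  have hprod := famSubeq_prod_of_forall fun i ↦ h.mono_left fun _ ↦ hA i
  exact hprod.mono_right (f := fun p ↦ (f (p.1, p.2.1), p.2.2))
    (fun p q hpq ↦ by grind [f.injective.eq_iff]) fun _ ↦ subset_rfl

/-- Two copies of the `D i` suffice because `T i k` and `T i l` can only meet when `k` and `l` are
equal or adjacent: one copy receives the `T i k` with `k` even, the other those with `k` odd. -/
theorem famSubeq_iUnion_inv_smul_union [ContinuousConstSMul G X] {γ : ℤ → G} {K : Set ℤ}
    (hK : K.Finite) {T : ι → ℤ → Set X} (hT : ∀ i k, IsOpen (T i k))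
    (hTdisj : ∀ i k l, k + 2 ≤ l → Disjoint (T i k) (T i l)) {M : Set X} (hM : IsOpen M)
    {D : ι → Set X} (hTD : ∀ i k, T i k ⊆ D i) {R : Set X} (hMR : M ⊆ R) :
    FamSubeq G (fun _ : Unit ↦ (⋃ i, ⋃ k ∈ K, (γ k)⁻¹ • T i k) ∪ M)
      (fun p : ZMod 2 × (ι ⊕ Fin 1) ↦ Sum.elim D (fun _ ↦ R) p.2) := by
  refine famSubeq_of_forall_exists_cover fun C _ hC ↦ ?_
  have := hK.to_subtype
  have disjoint_of_parity {i : ι} {k l : ℤ} (hne : k ≠ l) (hkl : (k : ZMod 2) = l) :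
      Disjoint (T i k) (T i l) := by
    have hmod : k % 2 = l % 2 := (ZMod.intCast_eq_intCast_iff' k l 2).1 hkl
    rcases hne.lt_or_gt with h | h
    · exact hTdisj i k l (by lia)
    · exact (hTdisj i l k (by lia)).symm
  refine ⟨(ι × K) ⊕ Unit, inferInstance,
    Sum.elim (fun p ↦ (γ p.2)⁻¹ • T p.1 p.2) (fun _ ↦ M), Sum.elim (fun p ↦ γ p.2) (fun _ ↦ 1),
    fun _ ↦ (), Sum.elim (fun p ↦ (((p.2 : ℤ) : ZMod 2), Sum.inl p.1)) (fun _ ↦ (0, Sum.inr 0)),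
    ?_, fun _ ↦ (hC ()).trans ?_, ?_, ?_⟩
  · exact Sum.forall.2 ⟨fun p ↦ (hT _ _).smul _, fun _ ↦ hM⟩
  · simp [iUnion_sum, iUnion_prod', iUnion_const]
  · simpa [Sum.forall] using And.intro (fun i k _ ↦ hTD i k) hMR
  · rintro (⟨i, k⟩ | _) (⟨j, l⟩ | _) hne hb
    · simp only [Sum.elim_inl, Prod.mk.injEq, Sum.inl.injEq] at hb
      obtain ⟨hkl, rfl⟩ := hb
      simp only [Sum.elim_inl, smul_inv_smul]
      exact disjoint_of_parity (fun h ↦ hne (by rw [Subtype.ext h])) hkl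
    · simp at hb
    · simp at hb
    · exact absurd rfl hne

end FamSubeq

/-- Cover reduction for a single homeomorphism: an action of the cyclic
group generated by a homeomorphism `g` is encoded as an action of `Multiplicative ℤ`, with
`g` the image of `1 : ℤ`. Given `{e, g}`-free open sets `U 1, …, U n` and `δ > 0`, there
are `{e, g}`-free open sets `V 1, V 2, V 3` with pairwise disjoint closures such that
`[∂V₁] + [∂V₂] + [∂V₃] + [X \ (V₁ ∪ V₂ ∪ V₃)] ≺ 8 (Σᵢ [(∂Uᵢ)^δ] + [X \ ⋃ᵢ Uᵢ^{-δ}])`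
in the type semigroup of the action, where, by the convention for closed sets, the closed
sets appearing are replaced by arbitrarily small metric thickenings. -/
theorem cyclic_cover_reduction {X : Type*} [MetricSpace X] [CompactSpace X]
    [MulAction (Multiplicative ℤ) X] [ContinuousConstSMul (Multiplicative ℤ) X]
    (n : ℕ) (U : Fin n → Set X)
    (hUopen : ∀ i, IsOpen (U i))
    (hUfree : ∀ i, Disjoint (U i) ((Multiplicative.ofAdd (1 : ℤ)) • U i))
    (δ : ℝ) (hδ : 0 < δ) :
    ∃ V : Fin 3 → Set X,
      (∀ i, IsOpen (V i)) ∧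
      (∀ i, Disjoint (V i) ((Multiplicative.ofAdd (1 : ℤ)) • V i)) ∧
      (Pairwise fun i j => Disjoint (closure (V i)) (closure (V j))) ∧
      ∀ τ : ℝ, 0 < τ →
        ∃ δL δR : ℝ, 0 < δL ∧ δL < τ ∧ 0 < δR ∧ δR < τ ∧
          FamSubeq (Multiplicative ℤ)
            (Sum.elim (fun i : Fin 3 => Metric.thickening δL (frontier (V i)))
              (fun _ : Fin 1 => Metric.thickening δL (Set.univ \ ⋃ i, V i)))
            (fun p : Fin 8 × (Fin n ⊕ Fin 1) =>
              Sum.elim (fun i : Fin n => Metric.thickening δ (frontier (U i)))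
                (fun _ : Fin 1 =>
                  Metric.thickening δR (Set.univ \ ⋃ i, innerSet δ (U i))) p.2) := by
  have W (i : Fin n) : InsetChain δ (U i) := (nonempty_insetChain (hUopen i) hδ).some
  obtain ⟨M, hM, hWM, hMinner⟩ := exists_isOpen_compl_iUnion_stage_subset W 0
  let O : Set X :=
    (⋃ i, ⋃ k ∈ Icc (-n : ℤ) (n + 1), (Multiplicative.ofAdd k)⁻¹ • (W i).gap k) ∪ M
  have hO : IsOpen O := .union
    (isOpen_iUnion fun i ↦ isOpen_biUnion fun k _ ↦ ((W i).isOpen_gap k).smul _) hM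
  have hWO : unstableSet (fun i ↦ (W i).stage) ∪ (⋃ i, (W i).stage 0)ᶜ ⊆ O :=
    union_subset_union (iUnion_mono fun i ↦ iUnion₂_mono fun k _ ↦
      smul_set_mono ((W i).closure_diff_subset_gap k)) hWM
  obtain ⟨V, hV, hVfree, hVdisj, hVO⟩ := exists_open_coloring_of_unstableSet_subset
    (fun i ↦ (W i).isOpen_stage) (fun i ↦ (W i).antitone) (fun i ↦ (W i).stage_subset) hUfree hO hWO
  obtain ⟨η, hη, hηO⟩ := exists_thickening_frontier_and_remainder_subset hV
    (fun c c' hc ↦ (hVdisj hc).mono subset_closure subset_closure) hO hVO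
  refine ⟨V, hV, hVfree, hVdisj, fun τ hτ ↦ ⟨min η (τ / 2), τ / 2, by positivity,
    min_lt_of_right_lt (half_lt_self hτ), half_pos hτ, half_lt_self hτ, ?_⟩⟩
  have hOsub := famSubeq_iUnion_inv_smul_union (γ := Multiplicative.ofAdd)
    (finite_Icc (-n : ℤ) (n + 1)) (fun i ↦ (W i).isOpen_gap)
    (fun i _ _ ↦ (W i).disjoint_gap) hM (fun i ↦ (W i).gap_subset)
    (hMinner.trans (Metric.self_subset_thickening (half_pos hτ) _))
  exact hOsub.copies_of_card_le (hηO _ (min_le_left _ _)) (by simp [ZMod.card])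
end

section
/- Let Y be a compact metrizable space, N ∈ ℕ, and let F : Y → [0,1]^N be continuous. Let γ ≥ 0 and δ > 0, let 𝒰 be a finite open cover of Y, and let 𝒱 be a finite collection of open subsets of Y such that (i) ord(𝒰) + ord(𝒱) ≤ (1−γ)N/2, and (ii) |F(x) − F(y)|_∞ < δ/2 for every U ∈ 𝒰 and all x, y ∈ U. Then there exists a continuous map F̃ : Y → [0,1]^N with sup_{y∈Y} |F(y) − F̃(y)|_∞ < δ such that for every subset I ⊂ {1,…,N} with |I| > (1−γ)N, the map π_I ∘ F̃ encodes every set in the collection 𝒰 ⊔ 𝒱. -/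
open Set Topology

/-- `H` encodes the set `U`: `H⁻¹(H(U)) = U`. -/
def Encodes {Y Z : Type*} (H : Y → Z) (U : Set Y) : Prop :=
  H ⁻¹' (H '' U) = U

/-- The order of a finite family of sets: the supremum over points of the number of
members containing the point. -/
noncomputable def famOrd {Y ι : Type*} (U : ι → Set Y) : ℕ :=
  ⨆ y : Y, ({i : ι | y ∈ U i} : Set ι).ncard

/-!
Assign to every member of `𝒰 ⊔ 𝒱` a vertex in the cube, near the value of `F` on that member if it
belongs to `𝒰`, and map `y` to the barycentre of the vertices with weights positive exactly on the
members containing `y`, giving little total weight to `𝒱`. At most `ord 𝒰 + ord 𝒱` weights are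
nonzero at any point, so two points involve at most `|I|` vertices. If the vertices are in general
position, so that any `|I|` of them are linearly independent after projecting to `I`, then
points with the same `I`-projection have the same weights, hence lie in the same members.
-/

section GeneralPosition

variable {R α κ : Type*} [CommRing R]

/-- The rows of `v` are in general position with respect to the coordinate projections: any
`|I|` or fewer of them are linearly independent after projecting to the coordinates in `I`. -/
def InGeneralPosition (v : α → κ → R) : Prop :=
  ∀ (S : Finset α) (I : Finset κ), S.card ≤ I.card →
    LinearIndepOn R (fun a ↦ I.restrict (v a)) (S : Set α)

open Classical in
/-- The minor with rows `S` and columns `f` of the generic `α × κ` matrix, as a polynomial in the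
matrix entries. -/
noncomputable def genericMinor (R : Type*) [CommRing R] (S : Finset α) (f : S ↪ κ) :
    MvPolynomial (α × κ) R :=
  MvPolynomial.rename (Prod.map (↑) f) (Matrix.mvPolynomialX S S R).det

theorem genericMinor_ne_zero [Nontrivial R] (S : Finset α) (f : S ↪ κ) :
    genericMinor R S f ≠ 0 := by
  classical
  have hinj : Function.Injective (Prod.map (fun a : S ↦ (a : α)) f) :=
    Subtype.val_injective.prodMap f.injective
  exact (map_ne_zero_iff _ (MvPolynomial.rename_injective _ hinj)).2
    (Matrix.det_mvPolynomialX_ne_zero S R)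

open Classical in
theorem eval_genericMinor (v : α → κ → R) (S : Finset α) (f : S ↪ κ) :
    MvPolynomial.eval (Function.uncurry v) (genericMinor R S f) =
      (Matrix.of fun a b : S ↦ v a (f b)).det := by
  rw [genericMinor, MvPolynomial.eval_rename, Matrix.eval_det_mvPolynomialX]
  rfl

theorem inGeneralPosition_of_eval_genericMinor_ne_zero [IsDomain R] {v : α → κ → R}
    (hv : ∀ (S : Finset α) (f : S ↪ κ),
      MvPolynomial.eval (Function.uncurry v) (genericMinor R S f) ≠ 0) :
    InGeneralPosition v := by
  classical
  intro S I hSI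
  obtain ⟨f⟩ : Nonempty (S ↪ I) := Function.Embedding.nonempty_of_card_le (by simpa using hSI)
  have hdet := hv S (f.trans (Function.Embedding.subtype _))
  rw [eval_genericMinor] at hdet
  exact LinearIndependent.of_comp (LinearMap.funLeft R R f)
    (Matrix.linearIndependent_rows_of_det_ne_zero hdet)

theorem exists_inGeneralPosition [IsDomain R] [Finite α] [Finite κ] {s : α → κ → Set R}
    (hs : ∀ a k, (s a k).Infinite) :
    ∃ v : α → κ → R, (∀ a k, v a k ∈ s a k) ∧ InGeneralPosition v := by
  classical
  cases nonempty_fintype α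
  cases nonempty_fintype κ
  let P : MvPolynomial (α × κ) R := ∏ m : (S : Finset α) × (S ↪ κ), genericMinor R m.1 m.2
  have hP : P ≠ 0 := Finset.prod_ne_zero_iff.2 fun m _ ↦ genericMinor_ne_zero m.1 m.2
  obtain ⟨x, hxs, hx⟩ : ∃ x ∈ Set.pi univ (Function.uncurry s), MvPolynomial.eval x P ≠ 0 := by
    by_contra! hzero
    exact hP (MvPolynomial.funext_set _ (fun p ↦ hs p.1 p.2) (by simpa using hzero))
  rw [map_prod, Finset.prod_ne_zero_iff] at hx
  exact ⟨Function.curry x, fun a k ↦ hxs (a, k) trivial,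
    inGeneralPosition_of_eval_genericMinor_ne_zero fun S f ↦ hx ⟨S, f⟩ (Finset.mem_univ _)⟩

theorem InGeneralPosition.eq_of_restrict_linearCombination_eq [Fintype α] {v : α → κ → R}
    (hv : InGeneralPosition v) {I : Finset κ} {c d : α → R}
    (hI : (Function.support c).ncard + (Function.support d).ncard ≤ I.card)
    (h : I.restrict (Fintype.linearCombination R v c) =
      I.restrict (Fintype.linearCombination R v d)) : c = d := by
  classical
  let S : Finset α := (Function.support c ∪ Function.support d).toFinset
  have hS : S.card ≤ I.card := by
    rw [← Set.ncard_eq_toFinset_card']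
    exact (Set.ncard_union_le _ _).trans hI
  have hsupp : ∀ a ∉ S, c a - d a = 0 := fun a ha ↦ by
    simp only [S, Set.mem_toFinset, mem_union, Function.mem_support, not_or, not_not] at ha
    rw [ha.1, ha.2, sub_zero]
  have hsum : ∑ a ∈ S, (c a - d a) • I.restrict (v a) = 0 := by
    rw [Finset.sum_subset S.subset_univ fun a _ ha ↦ by rw [hsupp a ha, zero_smul]]
    ext k
    have hk := congrFun h k
    simp only [Finset.restrict, Fintype.linearCombination_apply, Finset.sum_apply, Pi.smul_apply,
      smul_eq_mul] at hk
    simp only [Finset.restrict, Finset.sum_apply, Pi.smul_apply, smul_eq_mul, sub_mul,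
      Finset.sum_sub_distrib, hk, sub_self, Pi.zero_apply]
  ext a
  by_cases ha : a ∈ S
  · exact sub_eq_zero.1 (linearIndepOn_finset_iff.1 (hv S I hS) _ hsum a ha)
  · exact sub_eq_zero.1 (hsupp a ha)

theorem exists_inGeneralPosition_dist_le [Finite α] [Fintype κ] {p : α → κ → ℝ}
    (hp : ∀ a k, p a k ∈ Icc (0 : ℝ) 1) {r : ℝ} (hr : 0 < r) :
    ∃ v : α → κ → ℝ, (∀ a k, v a k ∈ Icc (0 : ℝ) 1) ∧ (∀ a, dist (p a) (v a) ≤ r) ∧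
      InGeneralPosition v := by
  have hinf : ∀ a k, (Icc 0 1 ∩ Metric.closedBall (p a k) r).Infinite := fun a k ↦ by
    obtain ⟨h0, h1⟩ := hp a k
    rw [Real.closedBall_eq_Icc, Icc_inter_Icc]
    exact Icc_infinite (max_lt (lt_min one_pos (by linarith)) (lt_min (by linarith) (by linarith)))
  obtain ⟨v, hv, hgen⟩ := exists_inGeneralPosition hinf
  exact ⟨v, fun a k ↦ (hv a k).1,
    fun a ↦ (dist_pi_le_iff hr.le).2 fun k ↦ dist_comm (p a k) _ ▸ (hv a k).2, hgen⟩

end GeneralPosition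

section Order

variable {Y α β : Type*} [Finite α] [Finite β]

theorem ncard_le_famOrd (U : α → Set Y) (y : Y) : {a | y ∈ U a}.ncard ≤ famOrd U :=
  le_ciSup (f := fun y ↦ {a | y ∈ U a}.ncard)
    ⟨Nat.card α, by rintro _ ⟨z, rfl⟩; exact Set.ncard_le_card _⟩ y

theorem famOrd_sumElim_le (U : α → Set Y) (V : β → Set Y) :
    famOrd (Sum.elim U V) ≤ famOrd U + famOrd V := by
  refine ciSup_le' fun y ↦ ?_
  have hsplit : {a | y ∈ Sum.elim U V a} = Sum.inl '' {a | y ∈ U a} ∪ Sum.inr '' {b | y ∈ V b} := by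
    ext (a | b) <;> simp
  calc {a | y ∈ Sum.elim U V a}.ncard
      ≤ (Sum.inl '' {a | y ∈ U a}).ncard + (Sum.inr '' {b | y ∈ V b}).ncard :=
        hsplit ▸ Set.ncard_union_le _ _
    _ = {a | y ∈ U a}.ncard + {b | y ∈ V b}.ncard := by
        rw [Set.ncard_image_of_injective _ Sum.inl_injective,
          Set.ncard_image_of_injective _ Sum.inr_injective]
    _ ≤ famOrd U + famOrd V := add_le_add (ncard_le_famOrd U y) (ncard_le_famOrd V y)

end Order

section NerveMap

variable {Y α : Type*} [TopologicalSpace Y] [Fintype α]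

/-- `w` is a canonical map from `Y` to the nerve of the family `W`: its barycentric coordinates
form a partition of unity whose `a`-th member is nonzero exactly on `W a`, not merely supported
in it. -/
structure IsNerveMap (W : α → Set Y) (w : Y → α → ℝ) : Prop where
  continuous : Continuous w
  mem_stdSimplex : ∀ y, w y ∈ stdSimplex ℝ α
  support_eq : ∀ y, Function.support (w y) = {a | y ∈ W a}

theorem isNerveMap_inv_sum_smul {W : α → Set Y} {u : Y → α → ℝ} (hcont : Continuous u)
    (hnonneg : ∀ y a, 0 ≤ u y a) (hpos : ∀ y, 0 < ∑ a, u y a)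
    (hsupp : ∀ y, Function.support (u y) = {a | y ∈ W a}) :
    IsNerveMap W fun y ↦ (∑ a, u y a)⁻¹ • u y where
  continuous := by
    have hsum : Continuous fun y ↦ ∑ a, u y a := by fun_prop
    exact (hsum.inv₀ fun y ↦ (hpos y).ne').smul hcont
  mem_stdSimplex y := by
    refine ⟨fun a ↦ mul_nonneg (inv_nonneg.2 (hpos y).le) (hnonneg y a), ?_⟩
    simp only [Pi.smul_apply, smul_eq_mul, ← Finset.mul_sum, inv_mul_cancel₀ (hpos y).ne']
  support_eq y := by
    rw [← hsupp y]
    exact Function.support_const_smul_of_ne_zero _ _ (inv_ne_zero (hpos y).ne')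

theorem exists_continuous_nonneg_support_eq [PerfectlyNormalSpace Y] {U : Set Y}
    (hU : IsOpen U) : ∃ f : Y → ℝ, Continuous f ∧ (∀ y, 0 ≤ f y) ∧ Function.support f = U := by
  obtain ⟨f, hzero, hf⟩ :=
    perfectlyNormalSpace_iff_forall_isClosed_preimage_zero.1 ‹_› Uᶜ hU.isClosed_compl
  exact ⟨f, f.continuous, fun y ↦ (hf y).1, compl_injective (hzero ▸ Function.compl_support)⟩

theorem exists_continuous_support_eq_sum_le [PerfectlyNormalSpace Y] {W : α → Set Y}
    (hW : ∀ a, IsOpen (W a)) {h : Y → ℝ} (hcont : Continuous h) (hpos : ∀ y, 0 < h y) :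
    ∃ g : Y → α → ℝ, Continuous g ∧ (∀ y a, 0 ≤ g y a) ∧
      (∀ y, Function.support (g y) = {a | y ∈ W a}) ∧ ∀ y, ∑ a, g y a ≤ h y := by
  choose f hfcont hf0 hfW using fun a ↦ exists_continuous_nonneg_support_eq (hW a)
  have hf_sum (y : Y) : 0 ≤ ∑ a, f a y := Finset.sum_nonneg fun a _ ↦ hf0 a y
  have hdenom (y : Y) : 0 < 1 + ∑ a, f a y := add_pos_of_pos_of_nonneg one_pos (hf_sum y)
  let t : Y → ℝ := fun y ↦ h y / (1 + ∑ a, f a y)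
  have ht_cont : Continuous t := hcont.div (by fun_prop) fun y ↦ (hdenom y).ne'
  have ht_pos (y : Y) : 0 < t y := div_pos (hpos y) (hdenom y)
  refine ⟨fun y a ↦ t y * f a y, by fun_prop, fun y a ↦ mul_nonneg (ht_pos y).le (hf0 a y),
    fun y ↦ ?_, fun y ↦ ?_⟩
  · ext a
    simp only [Function.mem_support, mul_ne_zero_iff, (ht_pos y).ne', not_false_eq_true, true_and,
      ne_eq, Set.mem_ofPred_eq, ← hfW a]
  · calc ∑ a, t y * f a y = t y * ∑ a, f a y := (Finset.mul_sum _ _ _).symm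
      _ ≤ t y * (1 + ∑ a, f a y) := mul_le_mul_of_nonneg_left (by linarith) (ht_pos y).le
      _ = h y := div_mul_cancel₀ _ (hdenom y).ne'

theorem exists_isNerveMap_sumElim [PerfectlyNormalSpace Y] {ι β : Type*} [Fintype ι] [Fintype β]
    {U : ι → Set Y} {V : β → Set Y} (hU : ∀ i, IsOpen (U i)) (hcover : ⋃ i, U i = univ)
    (hV : ∀ j, IsOpen (V j)) {η : ℝ} (hη : 0 < η) :
    ∃ w : Y → ι ⊕ β → ℝ, IsNerveMap (Sum.elim U V) w ∧ ∀ y, ∑ j, w y (Sum.inr j) ≤ η := by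
  obtain ⟨f, hfcont, hf0, hfU, -⟩ :=
    exists_continuous_support_eq_sum_le hU continuous_one fun _ ↦ one_pos
  have hf_pos (y : Y) : 0 < ∑ i, f y i := by
    obtain ⟨i, hi⟩ := iUnion_eq_univ_iff.1 hcover y
    exact Finset.sum_pos' (fun i _ ↦ hf0 y i)
      ⟨i, Finset.mem_univ i, (hf0 y i).lt_of_ne' ((hfU y).superset hi)⟩
  obtain ⟨g, hgcont, hg0, hgV, hgf⟩ := exists_continuous_support_eq_sum_le hV
    (h := fun y ↦ η * ∑ i, f y i) (by fun_prop) fun y ↦ mul_pos hη (hf_pos y)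
  let u : Y → ι ⊕ β → ℝ := fun y ↦ Sum.elim (f y) (g y)
  have hu_cont : Continuous u := continuous_pi <| by
    rintro (i | j)
    exacts [(continuous_apply i).comp hfcont, (continuous_apply j).comp hgcont]
  have hu_nonneg (y : Y) : ∀ a, 0 ≤ u y a := Sum.forall.2 ⟨hf0 y, hg0 y⟩
  have hu_supp (y : Y) : Function.support (u y) = {a | y ∈ Sum.elim U V a} := by
    ext (i | j)
    exacts [Set.ext_iff.1 (hfU y) i, Set.ext_iff.1 (hgV y) j]
  have hg_sum (y : Y) : 0 ≤ ∑ j, g y j := Finset.sum_nonneg fun j _ ↦ hg0 y j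
  have hu_sum (y : Y) : ∑ a, u y a = ∑ i, f y i + ∑ j, g y j := Fintype.sum_sum_type _
  have hu_pos (y : Y) : 0 < ∑ a, u y a :=
    hu_sum y ▸ add_pos_of_pos_of_nonneg (hf_pos y) (hg_sum y)
  refine ⟨_, isNerveMap_inv_sum_smul hu_cont hu_nonneg hu_pos hu_supp, fun y ↦ ?_⟩
  calc ∑ j, (∑ a, u y a)⁻¹ * g y j = (∑ a, u y a)⁻¹ * ∑ j, g y j := (Finset.mul_sum _ _ _).symm
    _ ≤ η := by
      rw [inv_mul_le_iff₀ (hu_pos y), hu_sum, mul_comm]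
      exact (hgf y).trans (mul_le_mul_of_nonneg_left (le_add_of_nonneg_right (hg_sum y)) hη.le)

end NerveMap

section Perturbation

theorem encodes_iff_forall_mem_of_apply_eq {Y Z : Type*} {H : Y → Z} {U : Set Y} :
    Encodes H U ↔ ∀ x ∈ U, ∀ y, H x = H y → y ∈ U := by
  refine ⟨fun h x hx y hxy ↦ ?_, fun h ↦ Subset.antisymm ?_ (subset_preimage_image H U)⟩
  · exact h.subset ⟨x, hx, hxy⟩
  · rintro y ⟨x, hx, hxy⟩
    exact h x hx y hxy

theorem IsNerveMap.encodes_restrict_linearCombination {Y α κ : Type*} [TopologicalSpace Y]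
    [Fintype α] {W : α → Set Y} {w : Y → α → ℝ} (hw : IsNerveMap W w) {v : α → κ → ℝ}
    (hv : InGeneralPosition v) {I : Finset κ} (hI : 2 * famOrd W ≤ I.card) (a : α) :
    Encodes (fun y ↦ I.restrict (Fintype.linearCombination ℝ v (w y))) (W a) := by
  have hcard (y : Y) : (Function.support (w y)).ncard ≤ famOrd W :=
    hw.support_eq y ▸ ncard_le_famOrd W y
  refine encodes_iff_forall_mem_of_apply_eq.2 fun x hx y hxy ↦ ?_
  have hwxy : w x = w y := hv.eq_of_restrict_linearCombination_eq
    (by linarith [hcard x, hcard y]) hxy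
  have hsupp : {a | x ∈ W a} = {a | y ∈ W a} := by rw [← hw.support_eq, hwxy, hw.support_eq]
  exact hsupp.subset hx

theorem dist_linearCombination_sum_le {E ι β : Type*} [SeminormedAddCommGroup E]
    [NormedSpace ℝ E] [Fintype ι] [Fintype β] {w : ι ⊕ β → ℝ} (hw : w ∈ stdSimplex ℝ (ι ⊕ β))
    {v : ι ⊕ β → E} {x : E} {ρ C : ℝ} (hρ : 0 ≤ ρ)
    (hinl : ∀ i, w (Sum.inl i) ≠ 0 → dist (v (Sum.inl i)) x ≤ ρ)
    (hinr : ∀ j, dist (v (Sum.inr j)) x ≤ C) :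
    dist (Fintype.linearCombination ℝ v w) x ≤ ρ + C * ∑ j, w (Sum.inr j) := by
  have hinl_mul (i : ι) : w (Sum.inl i) * dist (v (Sum.inl i)) x ≤ w (Sum.inl i) * ρ := by
    rcases eq_or_ne (w (Sum.inl i)) 0 with h | h
    · simp only [h, zero_mul, le_refl]
    · exact mul_le_mul_of_nonneg_left (hinl i h) (hw.1 _)
  have hsum : ∑ i, w (Sum.inl i) ≤ 1 := by
    rw [← hw.2, Fintype.sum_sum_type]
    exact le_add_of_nonneg_right (Finset.sum_nonneg fun j _ ↦ hw.1 _)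
  calc dist (Fintype.linearCombination ℝ v w) x
      ≤ ∑ a, w a * dist (v a) x :=
        (convexOn_univ_dist x).map_sum_le (fun a _ ↦ hw.1 a) hw.2 fun _ _ ↦ mem_univ _
    _ = ∑ i, w (Sum.inl i) * dist (v (Sum.inl i)) x +
          ∑ j, w (Sum.inr j) * dist (v (Sum.inr j)) x := Fintype.sum_sum_type _
    _ ≤ ∑ i, w (Sum.inl i) * ρ + ∑ j, w (Sum.inr j) * C :=
        add_le_add (Finset.sum_le_sum fun i _ ↦ hinl_mul i) (Finset.sum_le_sum fun j _ ↦
          mul_le_mul_of_nonneg_left (hinr j) (hw.1 _))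
    _ ≤ ρ + C * ∑ j, w (Sum.inr j) := by
        rw [← Finset.sum_mul, ← Finset.sum_mul, mul_comm C]
        gcongr
        exact mul_le_of_le_one_left hρ hsum

theorem exists_mem_forall_dist_le {Y E : Type*} [PseudoMetricSpace E] {F : Y → E} {s : Set E}
    (hs : s.Nonempty) (hF : ∀ y, F y ∈ s) {U : Set Y} {ε : ℝ}
    (hosc : ∀ x ∈ U, ∀ y ∈ U, dist (F x) (F y) ≤ ε) :
    ∃ p ∈ s, ∀ y ∈ U, dist p (F y) ≤ ε := by
  rcases U.eq_empty_or_nonempty with rfl | ⟨x, hx⟩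
  · obtain ⟨p, hp⟩ := hs
    exact ⟨p, hp, fun y hy ↦ hy.elim⟩
  · exact ⟨F x, hF x, hosc x hx⟩

theorem perturbation_encoding_general {Y ι β κ : Type*} [TopologicalSpace Y]
    [PerfectlyNormalSpace Y] [Finite ι] [Finite β] [Fintype κ] {F : Y → κ → ℝ}
    (hF : ∀ y k, F y k ∈ Icc (0 : ℝ) 1) {ε δ : ℝ} (hεδ : ε < δ) {U : ι → Set Y} {V : β → Set Y}
    (hU : ∀ i, IsOpen (U i)) (hcover : ⋃ i, U i = univ) (hV : ∀ j, IsOpen (V j))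
    (hosc : ∀ i, ∀ x ∈ U i, ∀ y ∈ U i, dist (F x) (F y) ≤ ε) :
    ∃ G : Y → κ → ℝ, Continuous G ∧ (∀ y k, G y k ∈ Icc (0 : ℝ) 1) ∧
      (∀ y, dist (F y) (G y) < δ) ∧
      ∀ I : Finset κ, 2 * (famOrd U + famOrd V) ≤ I.card →
        (∀ i, Encodes (fun y ↦ I.restrict (G y)) (U i)) ∧
        (∀ j, Encodes (fun y ↦ I.restrict (G y)) (V j)) := by
  cases nonempty_fintype ι
  cases nonempty_fintype β
  choose p hp01 hpF using fun i ↦ exists_mem_forall_dist_le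
    (s := {x : κ → ℝ | ∀ k, x k ∈ Icc 0 1}) ⟨0, fun _ ↦ unitInterval.zero_mem⟩ hF (hosc i)
  have hr : 0 < (δ - ε) / 3 := by linarith
  obtain ⟨v, hv01, hpv, hgen⟩ := exists_inGeneralPosition_dist_le
    (p := Sum.elim p fun _ : β ↦ 0) (Sum.forall.2 ⟨hp01, fun _ _ ↦ unitInterval.zero_mem⟩) hr
  obtain ⟨w, hw, hwV⟩ := exists_isNerveMap_sumElim hU hcover hV hr
  have hclose (y : Y) : dist (F y) (Fintype.linearCombination ℝ v (w y)) < δ := by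
    have hε : 0 ≤ ε := by
      obtain ⟨i, hi⟩ := iUnion_eq_univ_iff.1 hcover y
      simpa only [dist_self] using hosc i y hi y hi
    have hinl (i : ι) (hi : w y (Sum.inl i) ≠ 0) :
        dist (v (Sum.inl i)) (F y) ≤ (δ - ε) / 3 + ε := by
      have hyi : y ∈ U i := (hw.support_eq y).subset hi
      exact (dist_triangle_left _ _ (p i)).trans (add_le_add (hpv (Sum.inl i)) (hpF i y hyi))
    have hinr (j : β) : dist (v (Sum.inr j)) (F y) ≤ 1 := (dist_pi_le_iff zero_le_one).2
      fun k ↦ Real.dist_le_of_mem_Icc_01 (hv01 _ k) (hF y k)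
    rw [dist_comm]
    linarith [dist_linearCombination_sum_le (hw.mem_stdSimplex y) (by positivity) hinl hinr, hwV y]
  refine ⟨fun y ↦ Fintype.linearCombination ℝ v (w y), ?_, fun y k ↦ ?_, hclose, fun I hI ↦ ?_⟩
  · exact (LinearMap.continuous_of_finiteDimensional _).comp hw.continuous
  · simp only [Fintype.linearCombination_apply, Finset.sum_apply, Pi.smul_apply]
    exact (convex_Icc 0 1).sum_mem (fun a _ ↦ (hw.mem_stdSimplex y).1 a)
      (hw.mem_stdSimplex y).2 fun a _ ↦ hv01 a k
  · have henc := hw.encodes_restrict_linearCombination hgen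
      ((Nat.mul_le_mul_left 2 (famOrd_sumElim_le U V)).trans hI)
    exact ⟨fun i ↦ henc (Sum.inl i), fun j ↦ henc (Sum.inr j)⟩

end Perturbation

/-- Perturbation lemma: given a continuous `F : Y → [0, 1]^N`, `γ ≥ 0`,
`δ > 0`, a finite open cover `𝒰` and a finite collection `𝒱` of open sets with
`ord(𝒰) + ord(𝒱) ≤ (1 - γ)N/2` and `F`-oscillation less than `δ/2` on each member of `𝒰`,
there is a continuous `F̃ : Y → [0, 1]^N` that is `δ`-close to `F` in the uniform maximum
norm and such that for any `I ⊆ {1, …, N}` with `|I| > (1 - γ)N` the projection `π_I ∘ F̃`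
encodes every member of `𝒰 ⊔ 𝒱`. -/
theorem perturbation_encoding {Y : Type*} [TopologicalSpace Y] [CompactSpace Y]
    [TopologicalSpace.MetrizableSpace Y]
    (N : ℕ) (F : Y → Fin N → ℝ) (hFcont : Continuous F)
    (hFrange : ∀ y i, F y i ∈ Set.Icc (0 : ℝ) 1)
    (γ δ : ℝ) (hγ : 0 ≤ γ) (hδ : 0 < δ)
    (m m' : ℕ) (𝒰 : Fin m → Set Y) (𝒱 : Fin m' → Set Y)
    (h𝒰open : ∀ i, IsOpen (𝒰 i)) (h𝒰cover : (⋃ i, 𝒰 i) = Set.univ)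
    (h𝒱open : ∀ j, IsOpen (𝒱 j))
    (hord : ((famOrd 𝒰 + famOrd 𝒱 : ℕ) : ℝ) ≤ (1 - γ) * N / 2)
    (hosc : ∀ i : Fin m, ∀ x ∈ 𝒰 i, ∀ y ∈ 𝒰 i, ∀ k, |F x k - F y k| < δ / 2) :
    ∃ Ft : Y → Fin N → ℝ, Continuous Ft ∧ (∀ y i, Ft y i ∈ Set.Icc (0 : ℝ) 1) ∧
      (∀ y k, |F y k - Ft y k| < δ) ∧
      ∀ I : Finset (Fin N), (1 - γ) * N < (I.card : ℝ) →
        (∀ i, Encodes (fun y => fun k : I => Ft y k) (𝒰 i)) ∧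
        (∀ j, Encodes (fun y => fun k : I => Ft y k) (𝒱 j)) := by
  have hosc' (i : Fin m) : ∀ x ∈ 𝒰 i, ∀ y ∈ 𝒰 i, dist (F x) (F y) ≤ δ / 2 := fun x hx y hy ↦
    (dist_pi_le_iff (half_pos hδ).le).2 fun k ↦ (hosc i x hx y hy k).le
  obtain ⟨G, hcont, hrange, hclose, henc⟩ :=
    perturbation_encoding_general hFrange (half_lt_self hδ) h𝒰open h𝒰cover h𝒱open hosc'
  refine ⟨G, hcont, hrange, fun y ↦ (dist_pi_lt_iff hδ).1 (hclose y), fun I hI ↦ henc I ?_⟩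
  have hcard : 2 * ((famOrd 𝒰 + famOrd 𝒱 : ℕ) : ℝ) ≤ I.card := by linarith
  exact_mod_cast hcard
end
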